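/- arXiv:1308.0758 — 4 statements merged into one kernel-verified Lean document; each statement's English description precedes it below -/
import Mathlib

section
/- If R is a right small dual ring, then the left annihilator l(J) of the Jacobson radical J of R is an essential submodule of R viewed as a left R-module. -/
open Pointwise

/-- The left annihilator `l(X) = {r : ∀ x ∈ X, r * x = 0}` of a subset of a ring. -/
def lAnn (R : Type*) [Ring R] (X : Set R) : Set R := {r : R | ∀ x ∈ X, r * x = 0}

/-- The right annihilator `r(X) = {r : ∀ x ∈ X, x * r = 0}` of a subset of a ring. -/
def rAnn (R : Type*) [Ring R] (X : Set R) : Set R := {r : R | ∀ x ∈ X, x * r = 0}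

/-- A right ideal of `R` (a submodule of `R` as a right `R`-module, i.e. an
`Rᵐᵒᵖ`-submodule) is small if `I + K ≠ R` for every proper right ideal `K`. -/
def IsSmallRightIdeal (R : Type*) [Ring R] (I : Submodule Rᵐᵒᵖ R) : Prop :=
  ∀ K : Submodule Rᵐᵒᵖ R, K ≠ ⊤ → I ⊔ K ≠ ⊤

/-- A left ideal of `R` is small if `I + K ≠ R` for every proper left ideal `K`. -/
def IsSmallLeftIdeal (R : Type*) [Ring R] (I : Ideal R) : Prop :=
  ∀ K : Ideal R, K ≠ ⊤ → I ⊔ K ≠ ⊤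

/-- `R` is right small dual if `rl(I) = I` for every small right ideal `I`. -/
def IsRightSmallDual (R : Type*) [Ring R] : Prop :=
  ∀ I : Submodule Rᵐᵒᵖ R, IsSmallRightIdeal R I → rAnn R (lAnn R (I : Set R)) = (I : Set R)

/-- `R` is left small dual if `lr(I) = I` for every small left ideal `I`. -/
def IsLeftSmallDual (R : Type*) [Ring R] : Prop :=
  ∀ I : Ideal R, IsSmallLeftIdeal R I → lAnn R (rAnn R (I : Set R)) = (I : Set R)

/-- `R` is right dual if `rl(I) = I` for every right ideal `I`. -/
def IsRightDual (R : Type*) [Ring R] : Prop :=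
  ∀ I : Submodule Rᵐᵒᵖ R, rAnn R (lAnn R (I : Set R)) = (I : Set R)

/-- `R` is left dual if `lr(I) = I` for every left ideal `I`. -/
def IsLeftDual (R : Type*) [Ring R] : Prop :=
  ∀ I : Ideal R, lAnn R (rAnn R (I : Set R)) = (I : Set R)

/-- A right `R`-module is torsionless if its nonzero elements are separated by
right `R`-linear maps to `R`. -/
def IsTorsionlessRight (R : Type*) [Ring R] (M : Type*) [AddCommGroup M] [Module Rᵐᵒᵖ M] : Prop :=
  ∀ m : M, m ≠ 0 → ∃ f : M →ₗ[Rᵐᵒᵖ] R, f m ≠ 0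

/-- The left annihilator of a subset, as a left ideal. -/
def lAnnIdeal (R : Type*) [Ring R] (X : Set R) : Ideal R where
  carrier := {r : R | ∀ x ∈ X, r * x = 0}
  add_mem' := fun {a b} ha hb x hx => by rw [add_mul, ha x hx, hb x hx, add_zero]
  zero_mem' := fun x _ => zero_mul x
  smul_mem' := fun c a ha x hx => by
    simp only [smul_eq_mul, Set.mem_setOf_eq] at *
    rw [mul_assoc, ha x hx, mul_zero]

/-- A right ideal `I` has a weak supplement if there is a right ideal `K` with
`I + K = R` and `I ∩ K` small. -/
def HasWeakSupplementRight (R : Type*) [Ring R] (I : Submodule Rᵐᵒᵖ R) : Prop :=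
  ∃ K : Submodule Rᵐᵒᵖ R, I ⊔ K = ⊤ ∧ IsSmallRightIdeal R (I ⊓ K)

/-- A left ideal `I` has a weak supplement if there is a left ideal `K` with
`I + K = R` and `I ∩ K` small. -/
def HasWeakSupplementLeft (R : Type*) [Ring R] (I : Ideal R) : Prop :=
  ∃ K : Ideal R, I ⊔ K = ⊤ ∧ IsSmallLeftIdeal R (I ⊓ K)

/-- `R` is semilocal if `R/J(R)` is a semisimple ring (equivalently, a semisimple
left `R`-module). -/
def IsSemilocalRing (R : Type*) [Ring R] : Prop :=
  IsSemisimpleModule R (R ⧸ Ideal.jacobson (⊥ : Ideal R))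

/-- `R` is semiperfect if it is semilocal and idempotents lift modulo `J(R)`. -/
def IsSemiperfectRing (R : Type*) [Ring R] : Prop :=
  IsSemilocalRing R ∧
    ∀ a : R, a * a - a ∈ Ideal.jacobson (⊥ : Ideal R) →
      ∃ e : R, e * e = e ∧ e - a ∈ Ideal.jacobson (⊥ : Ideal R)

/-- `R` is `J`-regular if `R/J(R)` is von Neumann regular. -/
def IsJRegular (R : Type*) [Ring R] : Prop :=
  ∀ a : R, ∃ b : R, a * b * a - a ∈ Ideal.jacobson (⊥ : Ideal R)

/-- `R` is left perfect: `R/J(R)` is semisimple and `J(R)` is left T-nilpotent. -/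
def IsLeftPerfect (R : Type*) [Ring R] : Prop :=
  IsSemilocalRing R ∧
    ∀ a : ℕ → R, (∀ i, a i ∈ Ideal.jacobson (⊥ : Ideal R)) →
      ∃ n : ℕ, (List.ofFn fun i : Fin (n + 1) => a i).prod = 0

/-- A right ideal `E` is essential if `E ∩ T ≠ 0` for every nonzero right ideal `T`. -/
def IsEssentialRightIdeal (R : Type*) [Ring R] (E : Submodule Rᵐᵒᵖ R) : Prop :=
  ∀ T : Submodule Rᵐᵒᵖ R, T ≠ ⊥ → E ⊓ T ≠ ⊥

/-!
Given `0 ≠ a ∈ L`, the right ideal `aJ` lies in `J`, hence is small, and `a ∉ aJ` by Nakayama's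
argument. As `rl(aJ) = aJ`, some `r` kills `aJ` but not `a`, and then `0 ≠ ra ∈ l(J) ∩ L`.
-/

section Semiring

variable {R : Type*} [Semiring R]

theorem rightIdeal_eq_top_of_mul_eq_one {K : Submodule Rᵐᵒᵖ R} {u v : R} (hu : u ∈ K)
    (huv : u * v = 1) : K = ⊤ := by
  refine eq_top_iff.2 fun x _ ↦ ?_
  have hx : MulOpposite.op (v * x) • u = x := by rw [op_smul_eq_mul, ← mul_assoc, huv, one_mul]
  exact hx ▸ K.smul_mem _ hu

/-- A two-sided ideal, regarded as a right ideal. Two-sided ideals are encoded as left ideals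
satisfying `Ideal.IsTwoSided`, and right ideals as `Rᵐᵒᵖ`-submodules of `R`; this passes from the
first to the second, so that right ideals such as `a • J` can be formed from the radical. -/
def asRightIdeal (I : Ideal R) [I.IsTwoSided] : Submodule Rᵐᵒᵖ R where
  __ := I.toAddSubmonoid
  smul_mem' c _ hx := I.mul_mem_right c.unop hx

theorem smul_asRightIdeal_le (a : R) (I : Ideal R) [I.IsTwoSided] :
    a • asRightIdeal I ≤ asRightIdeal I := by
  rintro _ ⟨x, hx, rfl⟩
  exact I.mul_mem_left a hx

end Semiring

section Ring

variable {R : Type*} [Ring R]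

theorem isUnit_of_sub_one_mem_jacobson {u : R} (hu : u - 1 ∈ Ideal.jacobson (⊥ : Ideal R)) :
    IsUnit u := by
  obtain ⟨s, hs⟩ := Ideal.exists_mul_sub_mem_of_sub_one_mem_jacobson u hu
  have hsu : s * u = 1 := sub_eq_zero.1 hs
  -- The left inverse `s` is again congruent to `1` modulo `J`, so it has a left inverse as well.
  have hs_sub_one : s - 1 ∈ Ideal.jacobson (⊥ : Ideal R) := by
    have hs_eq : s - 1 = -s * (u - 1) := by rw [mul_sub, mul_one, neg_mul, hsu]; abel
    exact hs_eq ▸ Ideal.mul_mem_left _ (-s) hu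
  obtain ⟨t, ht⟩ := Ideal.exists_mul_sub_mem_of_sub_one_mem_jacobson s hs_sub_one
  have hts : t * s = 1 := sub_eq_zero.1 ht
  have htu : t = u := left_inv_eq_right_inv hts hsu
  exact ⟨⟨u, s, htu ▸ hts, hsu⟩, rfl⟩

theorem isSmallRightIdeal_of_le_jacobson {I : Submodule Rᵐᵒᵖ R}
    (hI : I ≤ asRightIdeal (Ideal.jacobson ⊥)) : IsSmallRightIdeal R I := by
  intro K hK hIK
  obtain ⟨i, hi, k, hk, hik⟩ := Submodule.mem_sup.1 (hIK ▸ Submodule.mem_top : (1 : R) ∈ I ⊔ K)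
  have hk_sub_one : k - 1 = -i := by rw [← hik]; abel
  have hk_unit : IsUnit k := isUnit_of_sub_one_mem_jacobson (hk_sub_one ▸ neg_mem (hI hi))
  obtain ⟨v, hkv⟩ := hk_unit.exists_right_inv
  exact hK (rightIdeal_eq_top_of_mul_eq_one hk hkv)

theorem mem_smul_asRightIdeal_jacobson_iff {a : R} :
    a ∈ a • asRightIdeal (Ideal.jacobson ⊥) ↔ a = 0 := by
  refine ⟨?_, fun ha ↦ ha ▸ zero_mem _⟩
  rintro ⟨j, hj, haj : a * j = a⟩
  have hj_unit : IsUnit (1 - j) := isUnit_of_sub_one_mem_jacobson <| by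
    rw [sub_sub_cancel_left]
    exact neg_mem hj
  rw [← hj_unit.mul_left_eq_zero, mul_sub, mul_one, haj, sub_self]

theorem mul_mem_lAnn_iff {r a : R} {X : Set R} : r * a ∈ lAnn R X ↔ r ∈ lAnn R (a • X) := by
  simp only [lAnn, Set.mem_ofPred_eq, ← Set.image_smul, Set.forall_mem_image, smul_eq_mul,
    mul_assoc]

theorem IsRightSmallDual.exists_mem_lAnn_mul_ne_zero (h : IsRightSmallDual R)
    {I : Submodule Rᵐᵒᵖ R} (hI : IsSmallRightIdeal R I) {a : R} (ha : a ∉ I) :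
    ∃ r ∈ lAnn R (I : Set R), r * a ≠ 0 := by
  by_contra! ha_ann
  have ha_mem : a ∈ rAnn R (lAnn R (I : Set R)) := ha_ann
  rw [h I hI] at ha_mem
  exact ha ha_mem

end Ring

/-- If `R` is right small dual, then `l(J)` is an essential submodule of
`R` as a left `R`-module, where `J` is the Jacobson radical. -/
theorem lAnn_jacobson_essential (R : Type*) [Ring R] (h : IsRightSmallDual R) :
    ∀ L : Ideal R, L ≠ ⊥ →
      lAnnIdeal R (Ideal.jacobson (⊥ : Ideal R) : Set R) ⊓ L ≠ ⊥ := by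
  intro L hL
  obtain ⟨a, haL, ha⟩ := Submodule.exists_mem_ne_zero_of_ne_bot hL
  have haJ_small : IsSmallRightIdeal R (a • asRightIdeal (Ideal.jacobson ⊥)) :=
    isSmallRightIdeal_of_le_jacobson (smul_asRightIdeal_le a _)
  obtain ⟨r, hr, hra⟩ :=
    h.exists_mem_lAnn_mul_ne_zero haJ_small (mem_smul_asRightIdeal_jacobson_iff.not.2 ha)
  have hra_ann : r * a ∈ lAnn R (Ideal.jacobson (⊥ : Ideal R)) := mul_mem_lAnn_iff.2 hr
  exact (Submodule.ne_bot_iff _).2 ⟨r * a, ⟨hra_ann, L.mul_mem_left r haL⟩, hra⟩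
end

section
/- Let R be a right small dual ring and e an idempotent of R such that ReR = R (the two-sided ideal generated by e is all of R). Then the corner ring eRe is also a right small dual ring. -/
open Pointwise

/-- The corner `eRe` of a ring: for an idempotent `e`, the elements `x` with
`e * x = x` and `x * e = x`. -/
def Corner (R : Type*) [Ring R] (e : R) : Type _ := {x : R // e * x = x ∧ x * e = x}

section Corner

variable {R : Type*} [Ring R] {e : R}

instance : Add (Corner R e) :=
  ⟨fun x y => ⟨x.1 + y.1, by rw [mul_add, x.2.1, y.2.1], by rw [add_mul, x.2.2, y.2.2]⟩⟩

instance : Zero (Corner R e) := ⟨⟨0, by rw [mul_zero], by rw [zero_mul]⟩⟩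

instance : Neg (Corner R e) :=
  ⟨fun x => ⟨-x.1, by rw [mul_neg, x.2.1], by rw [neg_mul, x.2.2]⟩⟩

instance : Mul (Corner R e) :=
  ⟨fun x y => ⟨x.1 * y.1, by rw [← mul_assoc, x.2.1], by rw [mul_assoc, y.2.2]⟩⟩

/-- The ring structure on the corner `eRe` determined by an idempotent `e`,
with identity element `e`. -/
def cornerRing (he : e * e = e) : Ring (Corner R e) where
  add := (· + ·)
  add_assoc a b c := Subtype.ext (add_assoc a.1 b.1 c.1)
  zero := 0
  zero_add a := Subtype.ext (zero_add a.1)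
  add_zero a := Subtype.ext (add_zero a.1)
  nsmul := nsmulRec
  zsmul := zsmulRec
  neg := Neg.neg
  neg_add_cancel a := Subtype.ext (neg_add_cancel a.1)
  add_comm a b := Subtype.ext (add_comm a.1 b.1)
  mul := (· * ·)
  left_distrib a b c := Subtype.ext (left_distrib a.1 b.1 c.1)
  right_distrib a b c := Subtype.ext (right_distrib a.1 b.1 c.1)
  zero_mul a := Subtype.ext (zero_mul a.1)
  mul_zero a := Subtype.ext (mul_zero a.1)
  mul_assoc a b c := Subtype.ext (mul_assoc a.1 b.1 c.1)
  one := ⟨e, he, he⟩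
  one_mul a := Subtype.ext a.2.1
  mul_one a := Subtype.ext a.2.2

end Corner

/-!
Let `S` be `eRe`. Extension `I ↦ IR` of right ideals from `S` to `R` has contraction
`K ↦ K ∩ S` as a left inverse, because `IRe = I(eRe) = I`. Extension preserves smallness: if
`IR + K = R`, then `I + (K ∩ S) = S`, so `e ∈ K` and hence `IR ⊆ eR ⊆ K`. Duality of `R` thus gives
`rl(IR) = IR`, and it remains to show that `a ∈ rl(I)` in `S` lies in `rl(IR)`. If `x` kills `IR`,
then `eRxe ⊆ S` kills `I`, so `eRxa = 0`; since `ReR = R`, this forces `xa = 0`.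
-/

section Annihilators

variable {R : Type*} [Ring R]

lemma subset_rAnn_lAnn (X : Set R) : X ⊆ rAnn R (lAnn R X) :=
  fun a ha _ hx => hx a ha

lemma eq_zero_of_mem_rAnn_of_span_eq_top {X : Set R} (hX : Ideal.span X = ⊤) {x : R}
    (hx : x ∈ rAnn R X) : x = 0 := by
  have hle : Ideal.span X ≤ lAnnIdeal R {x} :=
    Ideal.span_le.2 fun y hy z hz => by rw [Set.mem_singleton_iff.1 hz, hx y hy]
  have h1 : (1 : R) ∈ lAnnIdeal R {x} := hle (hX ▸ Submodule.mem_top)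
  simpa only [one_mul] using h1 x rfl

end Annihilators

section ExtensionContraction

variable {S R : Type*} [Ring S] [Ring R] (φ : S →ₙ+* R)

/-- The extension of a right ideal `I` of `S` along a ring homomorphism `φ : S → R` that need not
preserve `1`: the right ideal `φ(I)R` of `R`. -/
def rightIdealExtension (I : Submodule Sᵐᵒᵖ S) : Submodule Rᵐᵒᵖ R :=
  Submodule.span Rᵐᵒᵖ (φ '' I)

/-- The contraction of a right ideal `K` of `R` along a ring homomorphism `φ : S → R` that need not
preserve `1`: the right ideal `φ⁻¹(K)` of `S`. It is not a `Submodule.comap`, since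
`Sᵐᵒᵖ → Rᵐᵒᵖ` need not preserve `1` either. -/
def rightIdealContraction (K : Submodule Rᵐᵒᵖ R) : Submodule Sᵐᵒᵖ S where
  carrier := φ ⁻¹' K
  add_mem' ha hb := by
    rw [Set.mem_preimage, map_add]
    exact K.add_mem ha hb
  zero_mem' := by
    rw [Set.mem_preimage, map_zero]
    exact K.zero_mem
  smul_mem' s x hx := by
    rw [Set.mem_preimage, MulOpposite.smul_eq_mul_unop, map_mul]
    exact K.smul_mem (MulOpposite.op (φ s.unop)) hx

variable {φ}

@[simp]
lemma mem_rightIdealContraction {K : Submodule Rᵐᵒᵖ R} {x : S} :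
    x ∈ rightIdealContraction φ K ↔ φ x ∈ K :=
  Iff.rfl

lemma map_mem_rightIdealExtension {I : Submodule Sᵐᵒᵖ S} {y : S} (hy : y ∈ I) :
    φ y ∈ rightIdealExtension φ I :=
  Submodule.subset_span (Set.mem_image_of_mem φ hy)

lemma map_one_mul_map (x : S) : φ 1 * φ x = φ x := by
  rw [← map_mul, one_mul]

lemma map_mul_map_one (x : S) : φ x * φ 1 = φ x := by
  rw [← map_mul, mul_one]

lemma map_one_mul_of_mem_rightIdealExtension {I : Submodule Sᵐᵒᵖ S} {t : R}
    (ht : t ∈ rightIdealExtension φ I) : φ 1 * t = t := by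
  induction ht using Submodule.closure_induction with
  | zero => exact mul_zero _
  | add t u _ _ ht hu => rw [mul_add, ht, hu]
  | smul_mem r t ht =>
    obtain ⟨y, -, rfl⟩ := ht
    rw [MulOpposite.smul_eq_mul_unop, ← mul_assoc, map_one_mul_map]

lemma rightIdealExtension_le_of_map_one_mem (I : Submodule Sᵐᵒᵖ S) {K : Submodule Rᵐᵒᵖ R}
    (hK : φ 1 ∈ K) : rightIdealExtension φ I ≤ K := by
  intro t ht
  rw [← map_one_mul_of_mem_rightIdealExtension ht]
  exact K.smul_mem (MulOpposite.op t) hK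

end ExtensionContraction

/-- `φ` identifies `S` with the corner ring `eRe` of `R`, where `e = φ 1`. That the values of `φ`
lie in `eRe` is automatic. -/
structure IsCornerEmbedding {S R : Type*} [Ring S] [Ring R] (φ : S →ₙ+* R) : Prop where
  injective : Function.Injective φ
  exists_map_eq (r : R) : ∃ s, φ s = φ 1 * r * φ 1

namespace IsCornerEmbedding

variable {S R : Type*} [Ring S] [Ring R] {φ : S →ₙ+* R}

lemma exists_map_eq_mul_map_one (hφ : IsCornerEmbedding φ) {I : Submodule Sᵐᵒᵖ S} {t : R}
    (ht : t ∈ rightIdealExtension φ I) : ∃ y ∈ I, φ y = t * φ 1 := by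
  induction ht using Submodule.closure_induction with
  | zero => exact ⟨0, I.zero_mem, by rw [map_zero, zero_mul]⟩
  | add t u _ _ ht hu =>
    obtain ⟨y, hy, hyt⟩ := ht
    obtain ⟨z, hz, hzu⟩ := hu
    exact ⟨y + z, I.add_mem hy hz, by rw [map_add, hyt, hzu, add_mul]⟩
  | smul_mem r t ht =>
    obtain ⟨y, hy, rfl⟩ := ht
    obtain ⟨s, hs⟩ := hφ.exists_map_eq r.unop
    refine ⟨y * s, I.smul_mem (MulOpposite.op s) hy, ?_⟩
    calc φ (y * s) = φ y * φ 1 * r.unop * φ 1 := by rw [map_mul, hs]; simp only [mul_assoc]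
      _ = r • φ y * φ 1 := by rw [map_mul_map_one, MulOpposite.smul_eq_mul_unop]

lemma contraction_extension (hφ : IsCornerEmbedding φ) (I : Submodule Sᵐᵒᵖ S) :
    rightIdealContraction φ (rightIdealExtension φ I) = I := by
  refine le_antisymm (fun a ha => ?_) fun a => map_mem_rightIdealExtension
  obtain ⟨y, hy, hya⟩ := hφ.exists_map_eq_mul_map_one ha
  rw [map_mul_map_one] at hya
  exact hφ.injective hya ▸ hy

lemma sup_contraction_eq_top (hφ : IsCornerEmbedding φ) {I : Submodule Sᵐᵒᵖ S}
    {K : Submodule Rᵐᵒᵖ R} (h : rightIdealExtension φ I ⊔ K = ⊤) :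
    I ⊔ rightIdealContraction φ K = ⊤ := by
  refine eq_top_iff.2 fun x _ => ?_
  obtain ⟨t, ht, k, hk, htk⟩ := Submodule.mem_sup.1 (h ▸ Submodule.mem_top : φ x ∈ _ ⊔ K)
  obtain ⟨y, hy, hyt⟩ := hφ.exists_map_eq_mul_map_one ht
  have hxy : φ (x - y) = k * φ 1 := by
    rw [map_sub, hyt, ← map_mul_map_one x, ← htk, add_mul, add_sub_cancel_left]
  have hxyK : x - y ∈ rightIdealContraction φ K := by
    rw [mem_rightIdealContraction, hxy]
    exact K.smul_mem (MulOpposite.op (φ 1)) hk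
  exact Submodule.mem_sup.2 ⟨y, hy, x - y, hxyK, add_sub_cancel y x⟩

lemma isSmallRightIdeal_extension (hφ : IsCornerEmbedding φ) {I : Submodule Sᵐᵒᵖ S}
    (hI : IsSmallRightIdeal S I) : IsSmallRightIdeal R (rightIdealExtension φ I) := by
  intro K hK htop
  have hcontr : rightIdealContraction φ K = ⊤ :=
    by_contra fun hne => hI _ hne (hφ.sup_contraction_eq_top htop)
  have hone : φ 1 ∈ K := mem_rightIdealContraction.1 (hcontr ▸ Submodule.mem_top)
  exact hK (sup_eq_right.2 (rightIdealExtension_le_of_map_one_mem I hone) ▸ htop)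

lemma map_mem_rAnn_lAnn_extension (hφ : IsCornerEmbedding φ)
    (hfaithful : ∀ x ∈ rAnn R (Set.range fun r => φ 1 * r), x * φ 1 = x → x = 0)
    {I : Submodule Sᵐᵒᵖ S} {a : S} (ha : a ∈ rAnn S (lAnn S (I : Set S))) :
    φ a ∈ rAnn R (lAnn R (rightIdealExtension φ I : Set R)) := by
  intro x hx
  refine hfaithful (x * φ a) ?_ (by rw [mul_assoc, map_mul_map_one])
  rintro _ ⟨r, rfl⟩
  obtain ⟨s, hs⟩ := hφ.exists_map_eq (r * x)
  have hs_mul (y : S) : φ (s * y) = φ 1 * r * (x * φ y) := by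
    rw [map_mul, hs, mul_assoc, map_one_mul_map]
    simp only [mul_assoc]
  have hsI : s ∈ lAnn S (I : Set S) := fun y hy => hφ.injective <| by
    rw [hs_mul, hx _ (map_mem_rightIdealExtension hy), mul_zero, map_zero]
  rw [← hs_mul, ha s hsI, map_zero]

end IsCornerEmbedding

/-- With `e = φ 1`, the assumption `hfaithful` says that `eR` is faithful on `Re`. Besides
idempotents with `ReR = R`, this covers central idempotents and the rank one idempotents of
`End(V)`. -/
theorem corner_isRightSmallDual_general {S R : Type*} [Ring S] [Ring R] {φ : S →ₙ+* R}
    (hφ : IsCornerEmbedding φ)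
    (hfaithful : ∀ x ∈ rAnn R (Set.range fun r => φ 1 * r), x * φ 1 = x → x = 0)
    (h : IsRightSmallDual R) : IsRightSmallDual S := by
  intro I hI
  refine Set.Subset.antisymm (fun a ha => ?_) (subset_rAnn_lAnn _)
  have haext : φ a ∈ rightIdealExtension φ I := by
    rw [← SetLike.mem_coe, ← h _ (hφ.isSmallRightIdeal_extension hI)]
    exact hφ.map_mem_rAnn_lAnn_extension hfaithful ha
  rwa [← mem_rightIdealContraction, hφ.contraction_extension] at haext

namespace Corner

variable {R : Type*} [Ring R] {e : R}

/-- The inclusion of the corner ring `eRe` into `R`, as a ring homomorphism sending `1` to `e`. -/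
def inclusion (he : e * e = e) :
    letI := cornerRing he
    Corner R e →ₙ+* R :=
  letI := cornerRing he
  { toFun := Subtype.val
    map_mul' := fun _ _ => rfl
    map_zero' := rfl
    map_add' := fun _ _ => rfl }

lemma isCornerEmbedding_inclusion (he : e * e = e) :
    letI := cornerRing he
    IsCornerEmbedding (inclusion he) :=
  letI := cornerRing he
  { injective := Subtype.val_injective
    exists_map_eq := fun r =>
      ⟨⟨e * r * e, by rw [← mul_assoc, ← mul_assoc, he], by rw [mul_assoc, he]⟩, rfl⟩ }

end Corner

/-- If `R` is right small dual and `e` is an idempotent with `ReR = R`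
(the ideal generated by `eR` is all of `R`), then the corner ring `eRe` is also
right small dual. -/
theorem corner_isRightSmallDual (R : Type*) [Ring R] (e : R) (he : e * e = e)
    (hgen : Ideal.span (Set.range fun r : R => e * r) = (⊤ : Ideal R))
    (h : IsRightSmallDual R) :
    @IsRightSmallDual (Corner R e) (cornerRing he) := by
  let _ := cornerRing he
  exact corner_isRightSmallDual_general (Corner.isCornerEmbedding_inclusion he)
    (fun _ hx _ => eq_zero_of_mem_rAnn_of_span_eq_top hgen hx) h
end

section
/- For a ring R with Jacobson radical J and an integer n ≥ 1, the following are equivalent: (1) the matrix ring M_n(R) is right small dual; (2) for every right R-submodule K of the column module R_n with K ⊆ J_n, the right R-module R_n/K is torsionless; (3) for every right R-submodule K ⊆ J_n of R_n and every b ∈ R_n, the inclusion l_{R^n}(K) ⊆ l_{R^n}(b) implies b ∈ K; (4) for every right R-submodule K ⊆ J_n of R_n, r_{R_n}(l_{R^n}(K)) = K. -/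
open Pointwise

/-!
Left multiplication by rows identifies `Rⁿ` with the dual of `Rₙ`, so `Rₙ ⧸ K` is torsionless
exactly when `K` is its own double annihilator. Right ideals of `Mₙ(R)` are the sets of matrices all
of whose columns lie in some `K ≤ Rₙ`, and double annihilators in `Mₙ(R)` are computed column by
column. Finally, a right ideal is small exactly when it is contained in the Jacobson radical, which
is left-right symmetric and, for matrices, entrywise.
-/

section SmallRightIdeal

theorem le_moduleJacobson_iff_forall_sup_ne_top {R M : Type*} [Ring R] [AddCommGroup M] [Module R M]
    [IsCoatomic (Submodule R M)] {N : Submodule R M} :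
    N ≤ Module.jacobson R M ↔ ∀ K : Submodule R M, K ≠ ⊤ → N ⊔ K ≠ ⊤ := by
  rw [Module.jacobson, le_sInf_iff]
  constructor
  · intro hN K hK hsup
    obtain ⟨m, hm, hKm⟩ := (eq_top_or_exists_le_coatom K).resolve_left hK
    exact hm.1 (top_le_iff.1 (hsup.ge.trans (sup_le (hN m hm) hKm)))
  · intro hsmall m hm
    by_contra hNm
    exact hsmall m hm.1 (hm.2 _ (right_lt_sup.2 hNm))

variable {S : Type*} [Ring S]

theorem isUnit_one_sub_mul_comm {a b : S} : IsUnit (1 - a * b) ↔ IsUnit (1 - b * a) := by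
  simpa [spectrum.mem_iff, not_iff_not] using
    spectrum.unit_mem_mul_comm (R := ℤ) (a := a) (b := b) (r := 1)

theorem exists_mul_one_sub_eq_one_of_mem_jacobson_bot {x : S}
    (hx : x ∈ Ideal.jacobson (⊥ : Ideal S)) : ∃ z, z * (1 - x) = 1 := by
  obtain ⟨z, hz⟩ := Ideal.exists_mul_sub_mem_of_sub_one_mem_jacobson (1 - x)
    (by simpa using hx : 1 - x - 1 ∈ Ideal.jacobson (⊥ : Ideal S))
  exact ⟨z, sub_eq_zero.1 hz⟩

theorem isUnit_one_sub_of_mem_jacobson_bot {x : S} (hx : x ∈ Ideal.jacobson (⊥ : Ideal S)) :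
    IsUnit (1 - x) := by
  obtain ⟨z, hz⟩ := exists_mul_one_sub_eq_one_of_mem_jacobson_bot hx
  -- `z = 1 + z * x` is again one minus an element of the radical, so `z` is left invertible too.
  obtain ⟨w, hw⟩ := exists_mul_one_sub_eq_one_of_mem_jacobson_bot (Ideal.mul_mem_left _ (-z) hx)
  have hzx : 1 - -z * x = z := by
    rw [← hz]
    noncomm_ring
  rw [hzx] at hw
  obtain rfl : w = 1 - x := left_inv_eq_right_inv hw hz
  exact ⟨⟨1 - x, z, hw, hz⟩, rfl⟩

theorem mem_jacobson_bot_iff_forall_isUnit {x : S} :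
    x ∈ Ideal.jacobson (⊥ : Ideal S) ↔ ∀ y, IsUnit (1 - y * x) := by
  refine ⟨fun hx y => isUnit_one_sub_of_mem_jacobson_bot (Ideal.mul_mem_left _ y hx), fun hx => ?_⟩
  rw [Ideal.mem_jacobson_iff]
  intro y
  obtain ⟨z, hz⟩ := (hx (-y)).exists_left_inv
  refine ⟨z, ?_⟩
  rw [Submodule.mem_bot, sub_eq_zero, ← hz]
  noncomm_ring

theorem op_mem_jacobson_bot_iff {x : S} :
    MulOpposite.op x ∈ Ideal.jacobson (⊥ : Ideal Sᵐᵒᵖ) ↔ x ∈ Ideal.jacobson (⊥ : Ideal S) := by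
  simp only [mem_jacobson_bot_iff_forall_isUnit, MulOpposite.op_surjective.forall,
    ← MulOpposite.op_mul, ← MulOpposite.op_one, ← MulOpposite.op_sub, isUnit_op,
    isUnit_one_sub_mul_comm (a := x)]

/-- The identification of the regular left module over `Sᵐᵒᵖ` with the regular right `S`-module. -/
def unopLinearEquivSelf (S : Type*) [Ring S] : Sᵐᵒᵖ ≃ₗ[Sᵐᵒᵖ] S where
  __ := MulOpposite.opAddEquiv.symm
  map_smul' _ _ := rfl

theorem mem_moduleJacobson_mulOpposite_iff {x : S} :
    x ∈ Module.jacobson Sᵐᵒᵖ S ↔ x ∈ Ideal.jacobson (⊥ : Ideal S) := by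
  rw [← op_mem_jacobson_bot_iff, Ideal.jacobson_bot, Ring.jacobson,
    ← Module.comap_jacobson_of_bijective (unopLinearEquivSelf S).bijective]
  rfl

theorem isSmallRightIdeal_iff_forall_mem_jacobson {I : Submodule Sᵐᵒᵖ S} :
    IsSmallRightIdeal S I ↔ ∀ x ∈ I, x ∈ Ideal.jacobson (⊥ : Ideal S) := by
  have : Module.Finite Sᵐᵒᵖ S := Module.Finite.equiv (unopLinearEquivSelf S)
  simp only [IsSmallRightIdeal, ← le_moduleJacobson_iff_forall_sup_ne_top,
    ← mem_moduleJacobson_mulOpposite_iff, SetLike.le_def]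

theorem mem_jacobson_bot_matrix_iff {ι : Type*} [Fintype ι] [DecidableEq ι] {A : Matrix ι ι S} :
    A ∈ Ideal.jacobson (⊥ : Ideal (Matrix ι ι S)) ↔
      ∀ i j, A i j ∈ Ideal.jacobson (⊥ : Ideal S) := by
  have h := SetLike.ext_iff.1 (TwoSidedIdeal.matrix_jacobson_bot (R := S) (n := ι)) A
  simpa only [TwoSidedIdeal.mem_matrix, TwoSidedIdeal.mem_jacobson_iff, Ideal.mem_jacobson_iff,
    TwoSidedIdeal.mem_bot, Submodule.mem_bot] using h.symm

end SmallRightIdeal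

section Columns

open Matrix

variable {R ι : Type*} [Ring R] [Fintype ι]

/-- The row vectors `c` with `c * x = 0` for every column `x` in `X`, written `l_{Rⁿ}(X)`. -/
def rowAnnihilator (X : Set (ι → R)) : Set (ι → R) := {c | ∀ x ∈ X, c ⬝ᵥ x = 0}

/-- The column vectors `b` with `c * b = 0` for every row `c` in `X`, written `r_{Rₙ}(X)`, as a
right submodule. -/
def columnAnnihilator (X : Set (ι → R)) : Submodule Rᵐᵒᵖ (ι → R) where
  carrier := {b | ∀ c ∈ X, c ⬝ᵥ b = 0}
  add_mem' ha hb c hc := by rw [dotProduct_add, ha c hc, hb c hc, add_zero]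
  zero_mem' c _ := dotProduct_zero c
  smul_mem' r b hb c hc := by rw [dotProduct_smul, hb c hc, smul_zero]

theorem le_columnAnnihilator_rowAnnihilator (K : Submodule Rᵐᵒᵖ (ι → R)) :
    K ≤ columnAnnihilator (rowAnnihilator K) :=
  fun b hb _ hc => hc b hb

theorem dotProductBilin_op_surjective :
    Function.Surjective (dotProductBilin R Rᵐᵒᵖ : (ι → R) →ₗ[R] (ι → R) →ₗ[Rᵐᵒᵖ] R) := by
  classical
  intro f
  refine ⟨fun i => f (Pi.single i 1), LinearMap.pi_ext' fun i => LinearMap.ext_ring_op ?_⟩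
  simp

theorem isTorsionlessRight_quotient_iff {M : Type*} [AddCommGroup M] [Module Rᵐᵒᵖ M]
    {K : Submodule Rᵐᵒᵖ M} :
    IsTorsionlessRight R (M ⧸ K) ↔
      ∀ b ∉ K, ∃ f : M →ₗ[Rᵐᵒᵖ] R, (∀ x ∈ K, f x = 0) ∧ f b ≠ 0 := by
  simp only [IsTorsionlessRight, K.mkQ_surjective.forall, Submodule.mkQ_apply, ne_eq,
    Submodule.Quotient.mk_eq_zero]
  refine forall₂_congr fun b _ => ⟨fun ⟨f, hf⟩ => ⟨f ∘ₗ K.mkQ, fun x hx => ?_, hf⟩,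
    fun ⟨f, hfK, hfb⟩ => ⟨K.liftQ f hfK, hfb⟩⟩
  simp [(Submodule.Quotient.mk_eq_zero K).2 hx]

theorem isTorsionlessRight_pi_quotient_iff {K : Submodule Rᵐᵒᵖ (ι → R)} :
    IsTorsionlessRight R ((ι → R) ⧸ K) ↔ columnAnnihilator (rowAnnihilator K) ≤ K := by
  rw [isTorsionlessRight_quotient_iff]
  refine forall_congr' fun b => ?_
  rw [dotProductBilin_op_surjective.exists, not_imp_comm]
  refine imp_congr_left ?_
  push Not
  rfl

variable [DecidableEq ι]

/-- The right ideal of `Mₙ(R)` of matrices all of whose columns lie in `K`. -/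
def columnIdeal (K : Submodule Rᵐᵒᵖ (ι → R)) : Submodule (Matrix ι ι R)ᵐᵒᵖ (Matrix ι ι R) where
  carrier := {A | ∀ j, A.col j ∈ K}
  add_mem' hA hB j := K.add_mem (hA j) (hB j)
  zero_mem' _ := K.zero_mem
  smul_mem' C A hA j := by
    have hcol : (A * C.unop).col j = ∑ k, MulOpposite.op (C.unop k j) • A.col k := by
      ext i
      simp [mul_apply]
    exact hcol ▸ K.sum_mem fun k _ => K.smul_mem _ (hA k)

/-- The columns that occur as the common column of a matrix in `I` with all columns equal. This
is inverse to `columnIdeal`. -/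
def columnSubmodule (I : Submodule (Matrix ι ι R)ᵐᵒᵖ (Matrix ι ι R)) :
    Submodule Rᵐᵒᵖ (ι → R) where
  carrier := {b | replicateCol ι b ∈ I}
  add_mem' ha hb := I.add_mem ha hb
  zero_mem' := I.zero_mem
  smul_mem' r b hb := by
    have hsmul : replicateCol ι (r • b) = replicateCol ι b * diagonal fun _ => r.unop := by
      ext i j
      simp [MulOpposite.smul_eq_mul_unop]
    exact (hsmul ▸ I.smul_mem (MulOpposite.op _) hb : replicateCol ι (r • b) ∈ I)

theorem replicateCol_mem_columnIdeal {K : Submodule Rᵐᵒᵖ (ι → R)} {b : ι → R} (hb : b ∈ K) :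
    replicateCol ι b ∈ columnIdeal K :=
  fun _ => hb

theorem replicateCol_mem_columnIdeal_iff [Nonempty ι] {K : Submodule Rᵐᵒᵖ (ι → R)} {b : ι → R} :
    replicateCol ι b ∈ columnIdeal K ↔ b ∈ K :=
  ⟨fun h => h (Classical.arbitrary ι), replicateCol_mem_columnIdeal⟩

theorem columnIdeal_columnSubmodule (I : Submodule (Matrix ι ι R)ᵐᵒᵖ (Matrix ι ι R)) :
    columnIdeal (columnSubmodule I) = I := by
  ext A
  constructor
  · intro hA
    have hsum : A = ∑ j, replicateCol ι (A.col j) * single j j 1 := by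
      ext i j
      simp [Matrix.sum_apply, mul_apply, single_apply, ite_and]
    rw [hsum]
    exact I.sum_mem fun j _ => I.smul_mem (MulOpposite.op _) (hA j)
  · intro hA j
    have hcol : replicateCol ι (A.col j) = A * replicateCol ι (Pi.single j 1) := by
      ext i k
      simp [mul_apply, Pi.single_apply]
    exact (hcol ▸ I.smul_mem (MulOpposite.op _) hA : replicateCol ι (A.col j) ∈ I)

theorem columnIdeal_surjective :
    Function.Surjective (columnIdeal : Submodule Rᵐᵒᵖ (ι → R) → _) :=
  fun I => ⟨columnSubmodule I, columnIdeal_columnSubmodule I⟩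

theorem columnIdeal_injective :
    Function.Injective (columnIdeal : Submodule Rᵐᵒᵖ (ι → R) → _) := by
  cases isEmpty_or_nonempty ι
  · exact Function.injective_of_subsingleton _
  · intro K L hKL
    ext b
    rw [← replicateCol_mem_columnIdeal_iff, hKL, replicateCol_mem_columnIdeal_iff]

theorem isSmallRightIdeal_columnIdeal_iff {K : Submodule Rᵐᵒᵖ (ι → R)} :
    IsSmallRightIdeal (Matrix ι ι R) (columnIdeal K) ↔
      ∀ b ∈ K, ∀ i, b i ∈ Ideal.jacobson (⊥ : Ideal R) := by
  simp only [isSmallRightIdeal_iff_forall_mem_jacobson, mem_jacobson_bot_matrix_iff]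
  exact ⟨fun h b hb i => h _ (replicateCol_mem_columnIdeal hb) i i,
    fun h A hA i j => h _ (hA j) i⟩

theorem lAnn_columnIdeal (K : Submodule Rᵐᵒᵖ (ι → R)) :
    lAnn (Matrix ι ι R) (columnIdeal K) = {C | ∀ i, C.row i ∈ rowAnnihilator K} := by
  ext C
  exact ⟨fun hC i x hx => congr_fun₂ (hC _ (replicateCol_mem_columnIdeal hx)) i i,
    fun hC A hA => Matrix.ext fun i j => hC i _ (hA j)⟩

theorem rAnn_setOf_row_mem (X : Set (ι → R)) :
    rAnn (Matrix ι ι R) {C | ∀ i, C.row i ∈ X} = columnIdeal (columnAnnihilator X) := by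
  ext A
  exact ⟨fun hA j c hc => congr_fun₂ (hA (replicateRow ι c) fun _ => hc) j j,
    fun hA C hC => Matrix.ext fun i j => hA j _ (hC i)⟩

theorem isRightSmallDual_matrix_iff :
    IsRightSmallDual (Matrix ι ι R) ↔
      ∀ K : Submodule Rᵐᵒᵖ (ι → R), (∀ b ∈ K, ∀ i, b i ∈ Ideal.jacobson (⊥ : Ideal R)) →
        columnAnnihilator (rowAnnihilator K) = K := by
  simp only [IsRightSmallDual, columnIdeal_surjective.forall, isSmallRightIdeal_columnIdeal_iff,
    lAnn_columnIdeal, rAnn_setOf_row_mem, SetLike.coe_set_eq, columnIdeal_injective.eq_iff]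

end Columns

open Ideal in
theorem matrix_isRightSmallDual_tfae_general (R ι : Type*) [Ring R] [Fintype ι] [DecidableEq ι] :
    [ IsRightSmallDual (Matrix ι ι R),
      ∀ K : Submodule Rᵐᵒᵖ (ι → R),
        (∀ b ∈ K, ∀ i, b i ∈ jacobson (⊥ : Ideal R)) →
          IsTorsionlessRight R ((ι → R) ⧸ K),
      ∀ K : Submodule Rᵐᵒᵖ (ι → R),
        (∀ b ∈ K, ∀ i, b i ∈ jacobson (⊥ : Ideal R)) →
          ∀ b : ι → R,
            {c : ι → R | ∀ x ∈ K, ∑ i, c i * x i = 0} ⊆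
                {c : ι → R | ∑ i, c i * b i = 0} →
              b ∈ K,
      ∀ K : Submodule Rᵐᵒᵖ (ι → R),
        (∀ b ∈ K, ∀ i, b i ∈ jacobson (⊥ : Ideal R)) →
          {b : ι → R |
              ∀ c : ι → R, (∀ x ∈ K, ∑ i, c i * x i = 0) → ∑ i, c i * b i = 0} =
            (K : Set (ι → R)) ].TFAE := by
  tfae_have 1 ↔ 4 := isRightSmallDual_matrix_iff.trans <|
    forall₂_congr fun K _ => SetLike.coe_set_eq.symm
  tfae_have 2 ↔ 3 := forall₂_congr fun K _ => isTorsionlessRight_pi_quotient_iff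
  tfae_have 4 ↔ 3 := forall₂_congr fun K _ =>
    SetLike.coe_set_eq.trans (le_columnAnnihilator_rowAnnihilator K).ge_iff_eq'.symm
  tfae_finish

open Ideal in
/-- equivalent characterizations of right small duality of the matrix
ring `Mₙ(R)` in terms of `n`-generated right `R`-modules `Rₙ/K` with `K ⊆ Jₙ`. -/
theorem matrix_isRightSmallDual_tfae (R : Type*) [Ring R] (n : ℕ) (hn : 1 ≤ n) :
    [ IsRightSmallDual (Matrix (Fin n) (Fin n) R),
      ∀ K : Submodule Rᵐᵒᵖ (Fin n → R),
        (∀ b ∈ K, ∀ i, b i ∈ jacobson (⊥ : Ideal R)) →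
          IsTorsionlessRight R ((Fin n → R) ⧸ K),
      ∀ K : Submodule Rᵐᵒᵖ (Fin n → R),
        (∀ b ∈ K, ∀ i, b i ∈ jacobson (⊥ : Ideal R)) →
          ∀ b : Fin n → R,
            {c : Fin n → R | ∀ x ∈ K, ∑ i, c i * x i = 0} ⊆
                {c : Fin n → R | ∑ i, c i * b i = 0} →
              b ∈ K,
      ∀ K : Submodule Rᵐᵒᵖ (Fin n → R),
        (∀ b ∈ K, ∀ i, b i ∈ jacobson (⊥ : Ideal R)) →
          {b : Fin n → R |
              ∀ c : Fin n → R, (∀ x ∈ K, ∑ i, c i * x i = 0) → ∑ i, c i * b i = 0} =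
            (K : Set (Fin n → R)) ].TFAE :=
  matrix_isRightSmallDual_tfae_general R (Fin n)
end

section
/- If R is a left perfect ring, then R is small dual if and only if R is dual. -/
open Pointwise

/-!
If `T` is a left ideal and `K` a weak supplement of it, write `1 = a + k` with `a ∈ T`, `k ∈ K`.
Right multiplication by `k` is `1` modulo `T` and sends `T` into `T ∩ K`, so it reduces
`lr(T) = T` to `lr(T ∩ K) = T ∩ K`, where `T ∩ K` is small. Weak supplements of all one-sided
ideals exist as soon as `R` is semilocal: take a complement modulo `J(R)` and pull it back.
-/

section Semilinear

variable {R S M N : Type*} [Ring R] [Ring S] [AddCommGroup M] [Module R M] [AddCommGroup N]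
  [Module S N] {σ : R →+* S} [RingHomSurjective σ]

theorem exists_sup_eq_top_and_inf_le_ker [IsSemisimpleModule S N] (f : M →ₛₗ[σ] N)
    (T : Submodule R M) : ∃ K : Submodule R M, T ⊔ K = ⊤ ∧ T ⊓ K ≤ LinearMap.ker f := by
  obtain ⟨C, hC⟩ := exists_isCompl (T.map f)
  refine ⟨C.comap f, Submodule.eq_top_iff'.2 fun x => ?_, fun x ⟨hxT, hxC⟩ => ?_⟩
  · obtain ⟨_, c, ⟨t, ht, rfl⟩, hc, hx⟩ :=
      Submodule.codisjoint_iff_exists_add_eq.1 hC.codisjoint (f x)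
    have hxt : f (x - t) = c := by rw [map_sub, ← hx, add_sub_cancel_left]
    exact Submodule.mem_sup.2 ⟨t, ht, x - t, by rwa [Submodule.mem_comap, hxt],
      add_sub_cancel t x⟩
  · exact hC.disjoint.le_bot ⟨Submodule.mem_map_of_mem hxT, hxC⟩

end Semilinear

section Ring

variable {R : Type*} [Ring R]

theorem isUnit_of_one_sub_mem_jacobson_bot {r : R} (hr : 1 - r ∈ Ideal.jacobson (⊥ : Ideal R)) :
    IsUnit r := by
  have exists_left_inv {x : R} (hx : x - 1 ∈ Ideal.jacobson (⊥ : Ideal R)) : ∃ y, y * x = 1 := by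
    obtain ⟨y, hy⟩ := Ideal.exists_mul_sub_mem_of_sub_one_mem_jacobson x hx
    exact ⟨y, sub_eq_zero.1 hy⟩
  obtain ⟨s, hs⟩ := exists_left_inv (neg_sub 1 r ▸ neg_mem hr)
  have hsJ : s - 1 ∈ Ideal.jacobson (⊥ : Ideal R) := by
    have : s * (1 - r) = s - 1 := by rw [mul_sub, mul_one, hs]
    exact this ▸ Ideal.mul_mem_left _ s hr
  obtain ⟨t, ht⟩ := exists_left_inv hsJ
  exact isUnit_iff_exists.2 ⟨s, left_inv_eq_right_inv ht hs ▸ ht, hs⟩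

theorem isSmallLeftIdeal_of_le_jacobson_bot {I : Ideal R} (hI : I ≤ Ideal.jacobson ⊥) :
    IsSmallLeftIdeal R I := by
  intro K hK hIK
  obtain ⟨M, hM, hKM⟩ := Ideal.exists_le_maximal K hK
  have hIM : I ≤ M := hI.trans (sInf_le ⟨bot_le, hM⟩)
  exact hM.ne_top (top_le_iff.1 (hIK ▸ sup_le hIM hKM))

theorem isSmallRightIdeal_of_subset_jacobson_bot {I : Submodule Rᵐᵒᵖ R}
    (hI : (I : Set R) ⊆ Ideal.jacobson (⊥ : Ideal R)) : IsSmallRightIdeal R I := by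
  intro K hK hIK
  obtain ⟨i, k, hi, hk, hik⟩ :=
    Submodule.codisjoint_iff_exists_add_eq.1 (codisjoint_iff.2 hIK) 1
  obtain ⟨u, rfl⟩ : IsUnit k :=
    isUnit_of_one_sub_mem_jacobson_bot (eq_sub_of_add_eq hik ▸ hI hi)
  refine hK (Submodule.eq_top_iff'.2 fun x => ?_)
  simpa using K.smul_mem (MulOpposite.op (↑u⁻¹ * x)) hk

theorem IsSemilocalRing.hasWeakSupplementLeft (h : IsSemilocalRing R) (T : Ideal R) :
    HasWeakSupplementLeft R T := by
  have : IsSemisimpleModule R (R ⧸ Ideal.jacobson (⊥ : Ideal R)) := h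
  obtain ⟨K, hTK, hker⟩ :=
    exists_sup_eq_top_and_inf_le_ker (Ideal.jacobson (⊥ : Ideal R)).mkQ T
  rw [Submodule.ker_mkQ] at hker
  exact ⟨K, hTK, isSmallLeftIdeal_of_le_jacobson_bot hker⟩

theorem isSemisimpleRing_quotient_iff (I : Ideal R) [I.IsTwoSided] :
    IsSemisimpleRing (R ⧸ I) ↔ IsSemisimpleModule R (R ⧸ I) := by
  let idₛₗ : (R ⧸ I) →ₛₗ[Ideal.Quotient.mk I] (R ⧸ I) :=
    { AddMonoidHom.id _ with map_smul' := fun _ x => Quotient.inductionOn' x fun _ => rfl }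
  have : RingHomSurjective (Ideal.Quotient.mk I) := ⟨Ideal.Quotient.mk_surjective⟩
  exact (idₛₗ.isSemisimpleModule_iff_of_bijective Function.bijective_id).symm

/-- The quotient map `R → R ⧸ I` as a map of right modules. Its target is written as the left
regular module of `(R ⧸ I)ᵐᵒᵖ`, so that semisimplicity of that ring applies to it. -/
def quotientOpLinearMap (I : Ideal R) [I.IsTwoSided] :
    R →ₛₗ[RingHom.op (Ideal.Quotient.mk I)] (R ⧸ I)ᵐᵒᵖ where
  toFun x := MulOpposite.op (Ideal.Quotient.mk I x)
  map_add' _ _ := rfl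
  map_smul' _ _ := rfl

theorem mem_ker_quotientOpLinearMap {I : Ideal R} [I.IsTwoSided] {x : R} :
    x ∈ LinearMap.ker (quotientOpLinearMap I) ↔ x ∈ I := by
  rw [LinearMap.mem_ker, ← Ideal.Quotient.eq_zero_iff_mem]
  exact MulOpposite.op_eq_zero_iff _

theorem IsSemilocalRing.hasWeakSupplementRight (h : IsSemilocalRing R)
    (T : Submodule Rᵐᵒᵖ R) : HasWeakSupplementRight R T := by
  have : IsSemisimpleRing (R ⧸ Ideal.jacobson (⊥ : Ideal R)) :=
    (isSemisimpleRing_quotient_iff _).2 h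
  have : RingHomSurjective (RingHom.op (Ideal.Quotient.mk (Ideal.jacobson (⊥ : Ideal R)))) :=
    ⟨MulOpposite.op_surjective.comp
      (Ideal.Quotient.mk_surjective.comp MulOpposite.unop_surjective)⟩
  obtain ⟨K, hTK, hker⟩ :=
    exists_sup_eq_top_and_inf_le_ker (quotientOpLinearMap (Ideal.jacobson (⊥ : Ideal R))) T
  exact ⟨K, hTK, isSmallRightIdeal_of_subset_jacobson_bot fun x hx =>
    mem_ker_quotientOpLinearMap.1 (hker hx)⟩

theorem lAnn_rAnn_eq_of_sup_eq_top {T K : Ideal R} (hTK : T ⊔ K = ⊤)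
    (hinf : lAnn R (rAnn R ↑(T ⊓ K)) = ↑(T ⊓ K)) :
    lAnn R (rAnn R (T : Set R)) = T := by
  refine Set.Subset.antisymm (fun x hx => ?_) fun x hx y hy => hy x hx
  obtain ⟨a, k, ha, hk, hak⟩ :=
    Submodule.codisjoint_iff_exists_add_eq.1 (codisjoint_iff.2 hTK) 1
  have mul_k (t : R) : t * k = t - t * a := by rw [eq_sub_of_add_eq' hak, mul_sub, mul_one]
  have mul_k_mem {t : R} (ht : t ∈ T) : t * k ∈ T ⊓ K :=
    ⟨mul_k t ▸ T.sub_mem ht (T.mul_mem_left t ha), K.mul_mem_left t hk⟩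
  have hxk : x * k ∈ lAnn R (rAnn R ↑(T ⊓ K)) := fun y hy => by
    rw [mul_assoc]
    exact hx (k * y) fun t ht => by rw [← mul_assoc, hy _ (mul_k_mem ht)]
  rw [hinf] at hxk
  have hx_eq : x = x * a + x * k := by rw [← mul_add, hak, mul_one]
  exact hx_eq ▸ T.add_mem (T.mul_mem_left x ha) hxk.1

theorem rAnn_lAnn_eq_of_sup_eq_top {T K : Submodule Rᵐᵒᵖ R} (hTK : T ⊔ K = ⊤)
    (hinf : rAnn R (lAnn R ↑(T ⊓ K)) = ↑(T ⊓ K)) :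
    rAnn R (lAnn R (T : Set R)) = T := by
  refine Set.Subset.antisymm (fun x hx => ?_) fun x hx y hy => hy x hx
  obtain ⟨a, k, ha, hk, hak⟩ :=
    Submodule.codisjoint_iff_exists_add_eq.1 (codisjoint_iff.2 hTK) 1
  have k_mul (t : R) : k * t = t - a * t := by rw [eq_sub_of_add_eq' hak, sub_mul, one_mul]
  have a_mul_mem (t : R) : a * t ∈ T := T.smul_mem (MulOpposite.op t) ha
  have k_mul_mem {t : R} (ht : t ∈ T) : k * t ∈ T ⊓ K :=
    ⟨k_mul t ▸ T.sub_mem ht (a_mul_mem t), K.smul_mem (MulOpposite.op t) hk⟩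
  have hkx : k * x ∈ rAnn R (lAnn R ↑(T ⊓ K)) := fun y hy => by
    rw [← mul_assoc]
    exact hx (y * k) fun t ht => by rw [mul_assoc, hy _ (k_mul_mem ht)]
  rw [hinf] at hkx
  have hx_eq : x = a * x + k * x := by rw [← add_mul, hak, one_mul]
  exact hx_eq ▸ T.add_mem (a_mul_mem x) hkx.1

theorem IsSemilocalRing.isLeftSmallDual_iff (h : IsSemilocalRing R) :
    IsLeftSmallDual R ↔ IsLeftDual R := by
  refine ⟨fun hR T => ?_, fun hR I _ => hR I⟩
  obtain ⟨K, hTK, hsmall⟩ := h.hasWeakSupplementLeft T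
  exact lAnn_rAnn_eq_of_sup_eq_top hTK (hR _ hsmall)

theorem IsSemilocalRing.isRightSmallDual_iff (h : IsSemilocalRing R) :
    IsRightSmallDual R ↔ IsRightDual R := by
  refine ⟨fun hR T => ?_, fun hR I _ => hR I⟩
  obtain ⟨K, hTK, hsmall⟩ := h.hasWeakSupplementRight T
  exact rAnn_lAnn_eq_of_sup_eq_top hTK (hR _ hsmall)

end Ring

theorem leftPerfect_smallDual_iff_dual_general (R : Type*) [Ring R] (h : IsSemilocalRing R) :
    (IsLeftSmallDual R ∧ IsRightSmallDual R) ↔ (IsLeftDual R ∧ IsRightDual R) :=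
  and_congr h.isLeftSmallDual_iff h.isRightSmallDual_iff

/-- A left perfect ring is small dual iff it is dual. -/
theorem leftPerfect_smallDual_iff_dual (R : Type*) [Ring R] (h : IsLeftPerfect R) :
    (IsLeftSmallDual R ∧ IsRightSmallDual R) ↔ (IsLeftDual R ∧ IsRightDual R) :=
  leftPerfect_smallDual_iff_dual_general R h.1
end
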